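/- arXiv:1710.06056 — 5 statements merged into one kernel-verified Lean document; each statement's English description precedes it below -/
import Mathlib

section
/- Let U ⊂ ℝ^d be a compact set satisfying the (δ_b, d)-corner condition, and let f : U → ℝ be Lipschitz with constant κ > 0 (i.e. |f(θ) − f(θ′)| ≤ κ‖θ − θ′‖ for all θ, θ′ ∈ U). Let b ∈ ℝ and suppose there exists θ* ∈ U with f(θ*) ≥ b. Then for every γ > 0, the Lebesgue measure of the excursion set {θ ∈ U : f(θ) ≥ b − γ} is at least min{δ_b (γ/κ)^d, 1}. -/
open MeasureTheory

/-- Excursion-set volume lower bound: if `U` is compact and satisfies the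
`(δb, d)`-corner condition, `f` is `κ`-Lipschitz on `U`, and `f(θ*) ≥ b` for some
`θ* ∈ U`, then the Lebesgue measure of `{θ ∈ U : f(θ) ≥ b − γ}` is at least
`min{δb (γ/κ)^d, 1}`. -/
theorem excursion_set_measure_lower_bound
    (d : ℕ) (U : Set (EuclideanSpace ℝ (Fin d)))
    (hUcomp : IsCompact U)
    (δb : ℝ) (hδb : 0 < δb)
    (hcorner : ∀ θ ∈ U, ∀ s : ℝ, 0 < s →
      ENNReal.ofReal (min (δb * s ^ d) 1) ≤ volume (Metric.ball θ s ∩ U))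
    (f : EuclideanSpace ℝ (Fin d) → ℝ) (κ : ℝ) (hκ : 0 < κ)
    (hLip : ∀ θ ∈ U, ∀ θ' ∈ U, |f θ - f θ'| ≤ κ * ‖θ - θ'‖)
    (b : ℝ) (θs : EuclideanSpace ℝ (Fin d)) (hθs : θs ∈ U) (hfθs : b ≤ f θs)
    (γ : ℝ) (hγ : 0 < γ) :
    ENNReal.ofReal (min (δb * (γ / κ) ^ d) 1)
      ≤ volume {θ ∈ U | b - γ ≤ f θ} := by
  refine (hcorner θs hθs (γ / κ) (div_pos hγ hκ)).trans (measure_mono ?_)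
  rintro θ ⟨hball, hθ⟩
  have hdist : ‖θ - θs‖ * κ < γ := by
    rwa [← lt_div_iff₀ hκ, ← mem_ball_iff_norm]
  have hle := (abs_le.mp (hLip θ hθ θs hθs)).1
  exact ⟨hθ, by linarith⟩
end

section
/- Let U ⊂ ℝ^d be a compact set satisfying the (δ_b, d)-corner condition. Let {ζ(θ) : θ ∈ U} be a real-valued random field on a probability space (Ω, 𝓕, P) with almost surely continuous sample paths, such that almost surely |ζ(θ) − ζ(θ′)| ≤ κ‖θ − θ′‖ for all θ, θ′ ∈ U (for a constant κ > 0), and such that for every θ ∈ U and every A > 0, P(ζ(θ) ≥ A) ≤ e^{−A}. Then for every γ > 0 with δ_b (γ/κ)^d ≤ 1 and every b > γ, P( sup_{θ∈U} ζ(θ) ≥ b ) ≤ e^{−(b−γ)} · m(U) · κ^d / (γ^d δ_b), where m(U) denotes the Lebesgue measure of U. -/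
open MeasureTheory

/-- A maximal inequality for a field `ζ` with `κ`-Lipschitz paths: if every ball of
radius `r` centred in `U` meets `U` in volume at least `c`, then exceeding `b` somewhere on `U` forces
exceeding `b - κ * (r + ε)` on a discretised set of volume `c`. No measurability of `ζ` is needed. -/
theorem mul_measure_exists_ge_le {E Ω : Type*} [NormedAddCommGroup E] [MeasurableSpace E]
    [BorelSpace E] [SecondCountableTopology E] (m : Measure E) [MeasurableSpace Ω] (P : Measure Ω)
    {U : Set E} (hU : MeasurableSet U) (ζ : Ω → E → ℝ) {κ : ℝ} (hκ : 0 < κ)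
    (hLip : ∀ᵐ ω ∂P, ∀ θ ∈ U, ∀ θ' ∈ U, |ζ ω θ - ζ ω θ'| ≤ κ * ‖θ - θ'‖)
    {b r ε : ℝ} (hε : 0 < ε) {c p : ENNReal}
    (hc : ∀ θ ∈ U, c ≤ m (Metric.ball θ r ∩ U))
    (hp : ∀ θ ∈ U, P {ω | b - κ * (r + ε) ≤ ζ ω θ} ≤ p) :
    c * P {ω | ∃ θ ∈ U, b ≤ ζ ω θ} ≤ p * m U := by
  rcases U.eq_empty_or_nonempty with rfl | hne
  · simp
  have : Nonempty U := hne.to_subtype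
  obtain ⟨u, hu⟩ := TopologicalSpace.exists_dense_seq U
  set B : ℕ → Set E := fun n => Metric.ball (u n : E) ε with hB
  set C : ℕ → Set E := fun n => disjointed B n ∩ U with hC
  have hCmeas : ∀ n, MeasurableSet (C n) := fun n =>
    (MeasurableSet.disjointed (fun n => Metric.isOpen_ball.measurableSet) n).inter hU
  have hCdisj : Pairwise (Function.onFun Disjoint C) := fun i j hij =>
    (disjoint_disjointed B hij).mono Set.inter_subset_left Set.inter_subset_left
  have hCU : ⋃ n, C n = U := by
    rw [hC, ← Set.iUnion_inter, iUnion_disjointed, Set.inter_eq_right]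
    intro x hx
    obtain ⟨n, hn⟩ := hu.exists_dist_lt ⟨x, hx⟩ hε
    exact Set.mem_iUnion.2 ⟨n, hn⟩
  set H : ℕ → Set Ω := fun n => toMeasurable P {ω | b - κ * (r + ε) ≤ ζ ω (u n)} with hH
  have hHmeas : ∀ n, MeasurableSet (H n) := fun n => measurableSet_toMeasurable _ _
  set f : Ω → ENNReal := fun ω => ∑' n, (H n).indicator (fun _ => m (C n)) ω with hf
  have hfmeas : Measurable f :=
    Measurable.tsum fun n => measurable_const.indicator (hHmeas n)
  have hfint : ∫⁻ ω, f ω ∂P ≤ p * m U := by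
    rw [hf, lintegral_tsum fun n => (measurable_const.indicator (hHmeas n)).aemeasurable,
      ← hCU, measure_iUnion hCdisj hCmeas, ← ENNReal.tsum_mul_left]
    refine ENNReal.tsum_le_tsum fun n => ?_
    rw [lintegral_indicator_const (hHmeas n), mul_comm, hH]
    simp only [measure_toMeasurable]
    gcongr
    exact hp _ (u n).2
  have hsub : P {ω | ∃ θ ∈ U, b ≤ ζ ω θ} ≤ P {ω | c ≤ f ω} := by
    refine measure_mono_ae ?_
    filter_upwards [hLip] with ω hω
    rintro ⟨θ, hθ, hbθ⟩
    change c ≤ f ω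
    calc c ≤ m (Metric.ball θ r ∩ U) := hc θ hθ
      _ = m (⋃ n, Metric.ball θ r ∩ C n) := by rw [← Set.inter_iUnion, hCU]
      _ ≤ ∑' n, m (Metric.ball θ r ∩ C n) := measure_iUnion_le _
      _ ≤ f ω := by
        refine ENNReal.tsum_le_tsum fun n => ?_
        rcases (Metric.ball θ r ∩ C n).eq_empty_or_nonempty with h0 | ⟨x, hxr, hxC, hxU⟩
        · simp [h0]
        have hxu : dist x (u n) < ε := disjointed_subset B n hxC
        have hd : ‖θ - u n‖ ≤ r + ε := by
          rw [← dist_eq_norm]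
          have := dist_triangle θ x (u n)
          rw [Metric.mem_ball, dist_comm] at hxr
          linarith
        have hmem : ω ∈ H n := by
          apply subset_toMeasurable
          have h1 := (abs_le.1 (hω θ hθ (u n) (u n).2)).2
          have h2 := mul_le_mul_of_nonneg_left hd hκ.le
          change b - κ * (r + ε) ≤ ζ ω (u n)
          linarith
        rw [Set.indicator_of_mem hmem]
        exact measure_mono Set.inter_subset_right
  calc c * P {ω | ∃ θ ∈ U, b ≤ ζ ω θ} ≤ c * P {ω | c ≤ f ω} := by gcongr
    _ ≤ ∫⁻ ω, f ω ∂P := mul_meas_ge_le_lintegral hfmeas c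
    _ ≤ p * m U := hfint

/-- The stopped log-likelihood-ratio maximal tail estimate (eq. tail-LRT in the proof
of Theorem 2): if the random field `ζ` has a.s. continuous `κ`-Lipschitz sample paths
on the compact set `U` satisfying the `(δb, d)`-corner condition and marginal tails
`P(ζ(θ) ≥ A) ≤ e^{−A}`, then
`P(sup_{θ∈U} ζ(θ) ≥ b) ≤ e^{−(b−γ)} m(U) κ^d / (γ^d δb)`. -/
theorem sup_field_exponential_tail
    (d : ℕ) (U : Set (EuclideanSpace ℝ (Fin d)))
    (hUcomp : IsCompact U)
    (δb : ℝ) (hδb : 0 < δb)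
    (hcorner : ∀ θ ∈ U, ∀ s : ℝ, 0 < s →
      ENNReal.ofReal (min (δb * s ^ d) 1) ≤ volume (Metric.ball θ s ∩ U))
    {Ω : Type*} [MeasurableSpace Ω] (P : Measure Ω) [IsProbabilityMeasure P]
    (ζ : Ω → EuclideanSpace ℝ (Fin d) → ℝ)
    (hcont : ∀ᵐ ω ∂P, ContinuousOn (ζ ω) U)
    (κ : ℝ) (hκ : 0 < κ)
    (hLip : ∀ᵐ ω ∂P, ∀ θ ∈ U, ∀ θ' ∈ U, |ζ ω θ - ζ ω θ'| ≤ κ * ‖θ - θ'‖)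
    (htail : ∀ θ ∈ U, ∀ A : ℝ, 0 < A →
      P {ω | A ≤ ζ ω θ} ≤ ENNReal.ofReal (Real.exp (-A)))
    (γ b : ℝ) (hγ : 0 < γ) (hsmall : δb * (γ / κ) ^ d ≤ 1) (hb : γ < b) :
    P {ω | ∃ θ ∈ U, b ≤ ζ ω θ}
      ≤ ENNReal.ofReal
          (Real.exp (-(b - γ)) * (volume U).toReal * κ ^ d / (γ ^ d * δb)) := by
  have hlt : ∀ r ∈ Set.Ioo 0 (γ / κ),
      δb * r ^ d * P.real {ω | ∃ θ ∈ U, b ≤ ζ ω θ} ≤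
        Real.exp (-(b - γ)) * (volume U).toReal := by
    rintro r ⟨hr0, hr⟩
    have hmin : min (δb * r ^ d) 1 = δb * r ^ d := by
      refine min_eq_left (le_trans ?_ hsmall)
      gcongr
    have hγr : b - κ * (r + (γ / κ - r)) = b - γ := by
      field_simp
      ring
    have key := mul_measure_exists_ge_le volume P hUcomp.measurableSet ζ hκ hLip
      (b := b) (sub_pos.2 hr) (fun θ hθ => hmin ▸ hcorner θ hθ r hr0)
      (fun θ hθ => hγr ▸ htail θ hθ (b - γ) (sub_pos.2 hb))
    have key' := ENNReal.toReal_mono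
      (ENNReal.mul_ne_top ENNReal.ofReal_ne_top hUcomp.measure_lt_top.ne) key
    rwa [ENNReal.toReal_mul, ENNReal.toReal_mul, ENNReal.toReal_ofReal (by positivity),
      ENNReal.toReal_ofReal (by positivity), hγr] at key'
  have hlim : δb * (γ / κ) ^ d * P.real {ω | ∃ θ ∈ U, b ≤ ζ ω θ} ≤
      Real.exp (-(b - γ)) * (volume U).toReal := by
    have hcts : Continuous fun r : ℝ => δb * r ^ d * P.real {ω | ∃ θ ∈ U, b ≤ ζ ω θ} := by
      fun_prop
    refine le_of_tendsto (hcts.continuousWithinAt (s := Set.Iio (γ / κ)) (x := γ / κ)) ?_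
    filter_upwards [Ioo_mem_nhdsLT (div_pos hγ hκ)] with r hr using hlt r hr
  rw [← ofReal_measureReal]
  refine ENNReal.ofReal_le_ofReal ?_
  rw [le_div_iff₀ (by positivity)]
  calc P.real {ω | ∃ θ ∈ U, b ≤ ζ ω θ} * (γ ^ d * δb)
      = δb * (γ / κ) ^ d * P.real {ω | ∃ θ ∈ U, b ≤ ζ ω θ} * κ ^ d := by
        rw [div_pow]
        field_simp
    _ ≤ Real.exp (-(b - γ)) * (volume U).toReal * κ ^ d := by gcongr
end

section
/- Let U ⊂ ℝ^d be a compact set satisfying the (δ_b, d)-corner condition. Let (𝓕_n)_{n=0}^N be a filtration on a probability space (Ω, 𝓕, P), and let {M_n(θ) : 0 ≤ n ≤ N, θ ∈ U} be a family of random variables such that: for each θ ∈ U, (M_n(θ))_{n=0}^N is a martingale with respect to (𝓕_n) with M_0(θ) = 0 and |M_n(θ) − M_{n−1}(θ)| ≤ a almost surely for all 1 ≤ n ≤ N (for a constant a > 0); and almost surely, θ ↦ M_n(θ) is continuous and |M_n(θ) − M_n(θ′)| ≤ Nκ‖θ − θ′‖ for all 1 ≤ n ≤ N and all θ, θ′ ∈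 U (for a constant κ > 0). Then for every γ > 0 with δ_b (γ/(Nκ))^d ≤ 1 and every t > γ, P( max_{1≤n≤N} sup_{θ∈U} M_n(θ) ≥ t ) ≤ m(U) · exp( −(t − γ)^2 / (2 N a^2) ) · (Nκ)^d / (γ^d δ_b), where m(U) is the Lebesgue measure of U. -/
open MeasureTheory

/-- The chord bound for the exponential on `[-a, a]`. -/
theorem exp_mul_le_cosh_add_sinh_mul {a x : ℝ} (ha : 0 < a) (hx : |x| ≤ a) (l : ℝ) :
    Real.exp (l * x) ≤ Real.cosh (l * a) + Real.sinh (l * a) / a * x := by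
  obtain ⟨h₁, h₂⟩ := abs_le.mp hx
  have h := convexOn_exp.2 (Set.mem_univ (l * a)) (Set.mem_univ (-(l * a)))
    (div_nonneg (by linarith : 0 ≤ a + x) (by linarith : 0 ≤ 2 * a))
    (div_nonneg (by linarith : 0 ≤ a - x) (by linarith : 0 ≤ 2 * a)) (by field_simp; ring)
  simp only [smul_eq_mul] at h
  have hl : (a + x) / (2 * a) * (l * a) + (a - x) / (2 * a) * -(l * a) = l * x := by
    field_simp
    ring
  rw [hl] at h
  refine h.trans_eq ?_
  rw [Real.cosh_eq, Real.sinh_eq]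
  field_simp
  ring

section AzumaHoeffding

variable {Ω : Type*} {mΩ : MeasurableSpace Ω} {P : Measure Ω}
  {ℱ : Filtration ℕ mΩ} {X : ℕ → Ω → ℝ} {a : ℝ}

theorem ae_abs_le_of_abs_sub_le (h0 : ∀ᵐ ω ∂P, X 0 ω = 0)
    (hbdd : ∀ n, ∀ᵐ ω ∂P, |X (n + 1) ω - X n ω| ≤ a) (n : ℕ) :
    ∀ᵐ ω ∂P, |X n ω| ≤ n * a := by
  induction n with
  | zero => filter_upwards [h0] with ω hω; simp [hω]
  | succ n ih =>
    filter_upwards [ih, hbdd n] with ω h₁ h₂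
    rw [abs_le] at *
    push_cast
    constructor <;> linarith [h₁.1, h₁.2, h₂.1, h₂.2]

variable [IsProbabilityMeasure P]

theorem MeasureTheory.Martingale.integrable_exp_mul (hX : Martingale X ℱ P)
    (h0 : ∀ᵐ ω ∂P, X 0 ω = 0) (hbdd : ∀ n, ∀ᵐ ω ∂P, |X (n + 1) ω - X n ω| ≤ a)
    (l : ℝ) (n : ℕ) : Integrable (fun ω => Real.exp (l * X n ω)) P := by
  refine Integrable.of_bound (C := Real.exp (|l| * (n * a)))
    (Real.continuous_exp.comp_aestronglyMeasurable
      ((hX.integrable n).aestronglyMeasurable.const_mul l)) ?_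
  filter_upwards [ae_abs_le_of_abs_sub_le h0 hbdd n] with ω hω
  rw [Real.norm_eq_abs, Real.abs_exp]
  refine Real.exp_le_exp.mpr ?_
  calc l * X n ω ≤ |l * X n ω| := le_abs_self _
    _ = |l| * |X n ω| := abs_mul _ _
    _ ≤ _ := by gcongr

theorem MeasureTheory.Martingale.submartingale_exp_mul (hX : Martingale X ℱ P)
    (h0 : ∀ᵐ ω ∂P, X 0 ω = 0) (hbdd : ∀ n, ∀ᵐ ω ∂P, |X (n + 1) ω - X n ω| ≤ a) (l : ℝ) :
    Submartingale (fun n ω => Real.exp (l * X n ω)) ℱ P := by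
  refine submartingale_nat
    (fun n => Real.continuous_exp.comp_stronglyMeasurable ((hX.1 n).const_mul l))
    (hX.integrable_exp_mul h0 hbdd l) fun n => ?_
  have hconv : ConvexOn ℝ Set.univ fun x : ℝ => Real.exp (l * x) :=
    convexOn_exp.comp_linearMap (LinearMap.mulLeft ℝ l)
  have hjensen := hconv.map_condExp_le_univ (μ := P) (f := X (n + 1)) (ℱ.le n)
    (by fun_prop : Continuous fun x : ℝ => Real.exp (l * x)).lowerSemicontinuous
    (hX.integrable (n + 1)) (hX.integrable_exp_mul h0 hbdd l (n + 1))
  filter_upwards [hjensen, hX.2 n (n + 1) n.le_succ] with ω h₁ h₂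
  simp only [Function.comp_apply, h₂] at h₁
  exact h₁

theorem MeasureTheory.Martingale.integral_exp_mul_le (hX : Martingale X ℱ P) (ha : 0 < a)
    (h0 : ∀ᵐ ω ∂P, X 0 ω = 0) (hbdd : ∀ n, ∀ᵐ ω ∂P, |X (n + 1) ω - X n ω| ≤ a)
    (l : ℝ) (n : ℕ) :
    ∫ ω, Real.exp (l * X n ω) ∂P ≤ Real.exp (n * ((l * a) ^ 2 / 2)) := by
  induction n with
  | zero =>
    have : ∫ ω, Real.exp (l * X 0 ω) ∂P = ∫ _, 1 ∂P :=
      integral_congr_ae (by filter_upwards [h0] with ω hω; simp [hω])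
    simp [this]
  | succ n ih =>
    set E : Ω → ℝ := fun ω => Real.exp (l * X n ω)
    set D : Ω → ℝ := X (n + 1) - X n
    have hE : Integrable E P := hX.integrable_exp_mul h0 hbdd l n
    have hD : Integrable D P := (hX.integrable (n + 1)).sub (hX.integrable n)
    have hED : Integrable (E * D) P := hE.mul_bdd hD.aestronglyMeasurable (hbdd n)
    have hEmeas : StronglyMeasurable[ℱ n] E :=
      Real.continuous_exp.comp_stronglyMeasurable ((hX.1 n).const_mul l)
    have hcond : P[E * D | ℱ n] =ᵐ[P] 0 := by
      have hDcond : P[D | ℱ n] =ᵐ[P] P[X (n + 1) | ℱ n] - P[X n | ℱ n] :=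
        condExp_sub (hX.integrable (n + 1)) (hX.integrable n) _
      filter_upwards [condExp_mul_of_stronglyMeasurable_left hEmeas hED hD, hDcond,
        hX.2 n (n + 1) n.le_succ, hX.2 n n le_rfl] with ω h₁ h₂ h₃ h₄
      simp [h₁, h₂, h₃, h₄]
    have hzero : ∫ ω, (E * D) ω ∂P = 0 := by
      rw [← integral_condExp (ℱ.le n), integral_congr_ae hcond]
      simp
    calc ∫ ω, Real.exp (l * X (n + 1) ω) ∂P
        ≤ ∫ ω, (Real.cosh (l * a) * E ω + Real.sinh (l * a) / a * (E * D) ω) ∂P := by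
          refine integral_mono_ae (hX.integrable_exp_mul h0 hbdd l (n + 1))
            ((hE.const_mul _).add (hED.const_mul _)) ?_
          filter_upwards [hbdd n] with ω hω
          calc Real.exp (l * X (n + 1) ω)
              = E ω * Real.exp (l * (X (n + 1) ω - X n ω)) := by
                rw [← Real.exp_add]; congr 1; ring
            _ ≤ E ω * (Real.cosh (l * a) + Real.sinh (l * a) / a * (X (n + 1) ω - X n ω)) :=
                mul_le_mul_of_nonneg_left (exp_mul_le_cosh_add_sinh_mul ha hω l)
                  (Real.exp_pos _).le
            _ = _ := by simp only [D, Pi.mul_apply, Pi.sub_apply]; ring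
      _ = Real.cosh (l * a) * ∫ ω, E ω ∂P := by
          rw [integral_add (hE.const_mul _) (hED.const_mul _), integral_const_mul,
            integral_const_mul, hzero, mul_zero, add_zero]
      _ ≤ Real.exp ((l * a) ^ 2 / 2) * Real.exp (n * ((l * a) ^ 2 / 2)) := by
          gcongr
          exact Real.cosh_le_exp_half_sq _
      _ = Real.exp ((n + 1 : ℕ) * ((l * a) ^ 2 / 2)) := by
          rw [← Real.exp_add]
          push_cast
          ring_nf

/-- The maximal **Azuma–Hoeffding inequality** for martingales with bounded increments. -/
theorem MeasureTheory.Martingale.measure_exists_le_le_exp (hX : Martingale X ℱ P) (ha : 0 < a)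
    (h0 : ∀ᵐ ω ∂P, X 0 ω = 0) (hbdd : ∀ n, ∀ᵐ ω ∂P, |X (n + 1) ω - X n ω| ≤ a)
    {N : ℕ} (hN : 1 ≤ N) {s : ℝ} (hs : 0 < s) :
    P {ω | ∃ n ≤ N, s ≤ X n ω} ≤ ENNReal.ofReal (Real.exp (-s ^ 2 / (2 * N * a ^ 2))) := by
  have hN' : (0 : ℝ) < N := by exact_mod_cast hN
  set l : ℝ := s / (N * a ^ 2) with hl
  have hlpos : 0 < l := by positivity
  set f : ℕ → Ω → ℝ := fun n ω => Real.exp (l * X n ω)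
  set ε : NNReal := ⟨Real.exp (l * s), (Real.exp_pos _).le⟩
  set S : Set Ω := {ω | (ε : ℝ) ≤
    (Finset.range (N + 1)).sup' Finset.nonempty_range_add_one fun k => f k ω}
  have hsub : {ω | ∃ n ≤ N, s ≤ X n ω} ⊆ S := by
    rintro ω ⟨n, hn, hω⟩
    have hle : (ε : ℝ) ≤ f n ω :=
      Real.exp_le_exp.mpr (mul_le_mul_of_nonneg_left hω hlpos.le)
    exact hle.trans (Finset.le_sup' (fun k => f k ω) (Finset.mem_range.mpr (Nat.lt_succ_of_le hn)))
  have hdoob := maximal_ineq (hX.submartingale_exp_mul h0 hbdd l)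
    (fun n ω => (Real.exp_pos _).le) (ε := ε) N
  have hcoe : (ε : ENNReal) = ENNReal.ofReal (Real.exp (l * s)) :=
    (ENNReal.ofReal_eq_coe_nnreal _).symm
  have hbound : ENNReal.ofReal (Real.exp (l * s)) * P S
      ≤ ENNReal.ofReal (Real.exp (N * ((l * a) ^ 2 / 2))) := by
    rw [← hcoe]
    refine hdoob.trans (ENNReal.ofReal_le_ofReal ?_)
    exact (setIntegral_le_integral (hX.integrable_exp_mul h0 hbdd l N)
      (ae_of_all _ fun ω => (Real.exp_pos _).le)).trans (hX.integral_exp_mul_le ha h0 hbdd l N)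
  refine (measure_mono hsub).trans ?_
  rw [mul_comm, ← ENNReal.le_div_iff_mul_le (Or.inl (by simp [Real.exp_pos]))
    (Or.inl ENNReal.ofReal_ne_top), ← ENNReal.ofReal_div_of_pos (Real.exp_pos _),
    ← Real.exp_sub] at hbound
  refine hbound.trans_eq ?_
  congr 2
  rw [hl]
  field_simp
  ring

/-- The maximal **Azuma–Hoeffding inequality** for a martingale defined up to time `N`. -/
theorem measure_exists_le_le_exp_of_finite_horizon {N : ℕ} (hN : 1 ≤ N) (ha : 0 < a)
    (hadapt : ∀ n ≤ N, StronglyMeasurable[ℱ n] (X n)) (hint : ∀ n ≤ N, Integrable (X n) P)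
    (h0 : ∀ᵐ ω ∂P, X 0 ω = 0)
    (hmart : ∀ n, 1 ≤ n → n ≤ N → P[X n | ℱ (n - 1)] =ᵐ[P] X (n - 1))
    (hbdd : ∀ n, 1 ≤ n → n ≤ N → ∀ᵐ ω ∂P, |X n ω - X (n - 1) ω| ≤ a) {s : ℝ} (hs : 0 < s) :
    P {ω | ∃ n ≤ N, s ≤ X n ω} ≤ ENNReal.ofReal (Real.exp (-s ^ 2 / (2 * N * a ^ 2))) := by
  have hmeas : ∀ n, StronglyMeasurable[ℱ n] (X (min n N)) := fun n =>
    (hadapt _ (min_le_right n N)).mono (ℱ.mono (min_le_left n N))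
  have hX : Martingale (fun n => X (min n N)) ℱ P := by
    refine martingale_nat hmeas (fun n => hint _ (min_le_right n N)) fun n => ?_
    rcases lt_or_ge n N with h | h
    · have hstep := hmart (n + 1) (by omega) h
      simp only [min_eq_left h.le, min_eq_left (Nat.succ_le_of_lt h)]
      exact hstep.symm
    · have hconst : X (min (n + 1) N) = X (min n N) := by
        rw [min_eq_right h, min_eq_right (h.trans n.le_succ)]
      simp only [hconst]
      rw [condExp_of_stronglyMeasurable (ℱ.le n) (hmeas n) (hint _ (min_le_right n N))]
  have hXbdd : ∀ n, ∀ᵐ ω ∂P, |X (min (n + 1) N) ω - X (min n N) ω| ≤ a := by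
    intro n
    rcases lt_or_ge n N with h | h
    · simpa only [min_eq_left h.le, min_eq_left (Nat.succ_le_of_lt h), Nat.succ_eq_add_one,
        Nat.add_sub_cancel] using hbdd (n + 1) (by omega) h
    · refine ae_of_all _ fun ω => ?_
      rw [min_eq_right h, min_eq_right (h.trans n.le_succ)]
      simpa using ha.le
  refine (measure_mono ?_).trans
    (hX.measure_exists_le_le_exp ha (by simpa using h0) hXbdd hN hs)
  rintro ω ⟨n, hn, hω⟩
  exact ⟨n, hn, by simpa only [min_eq_left hn] using hω⟩

end AzumaHoeffding

/-- Maximal inequality for a martingale random field (Azuma–Hoeffding combined with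
the level-crossing aggregation lemma, used in the proof of Theorem 1): for a family
`{M_n(θ)}` of martingales with `M_0(θ) = 0`, increments bounded by `a`, and a.s.
continuous `Nκ`-Lipschitz sample paths on the compact set `U` satisfying the
`(δb, d)`-corner condition,
`P(max_{1≤n≤N} sup_{θ∈U} M_n(θ) ≥ t) ≤ m(U) exp(−(t−γ)²/(2Na²)) (Nκ)^d/(γ^d δb)`. -/
theorem martingale_field_maximal_inequality
    (d : ℕ) (U : Set (EuclideanSpace ℝ (Fin d)))
    (hUcomp : IsCompact U)
    (δb : ℝ) (hδb : 0 < δb)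
    (hcorner : ∀ θ ∈ U, ∀ s : ℝ, 0 < s →
      ENNReal.ofReal (min (δb * s ^ d) 1) ≤ volume (Metric.ball θ s ∩ U))
    {Ω : Type*} {mΩ : MeasurableSpace Ω} (P : Measure Ω) [IsProbabilityMeasure P]
    (ℱ : Filtration ℕ mΩ) (N : ℕ) (hN : 1 ≤ N)
    (M : ℕ → EuclideanSpace ℝ (Fin d) → Ω → ℝ)
    (a : ℝ) (ha : 0 < a) (κ : ℝ) (hκ : 0 < κ)
    (hadapt : ∀ θ ∈ U, ∀ n ≤ N, StronglyMeasurable[ℱ n] (M n θ))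
    (hint : ∀ θ ∈ U, ∀ n ≤ N, Integrable (M n θ) P)
    (hM0 : ∀ θ ∈ U, ∀ᵐ ω ∂P, M 0 θ ω = 0)
    (hmart : ∀ θ ∈ U, ∀ n, 1 ≤ n → n ≤ N →
      P[M n θ | ℱ (n - 1)] =ᵐ[P] M (n - 1) θ)
    (hbdd : ∀ θ ∈ U, ∀ n, 1 ≤ n → n ≤ N →
      ∀ᵐ ω ∂P, |M n θ ω - M (n - 1) θ ω| ≤ a)
    (hcontLip : ∀ᵐ ω ∂P, ∀ n, 1 ≤ n → n ≤ N →
      ContinuousOn (fun θ => M n θ ω) U ∧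
        ∀ θ ∈ U, ∀ θ' ∈ U, |M n θ ω - M n θ' ω| ≤ (N : ℝ) * κ * ‖θ - θ'‖)
    (γ t : ℝ) (hγ : 0 < γ)
    (hsmall : δb * (γ / ((N : ℝ) * κ)) ^ d ≤ 1) (ht : γ < t) :
    P {ω | ∃ n, 1 ≤ n ∧ n ≤ N ∧ ∃ θ ∈ U, t ≤ M n θ ω}
      ≤ ENNReal.ofReal ((volume U).toReal
          * Real.exp (-(t - γ) ^ 2 / (2 * (N : ℝ) * a ^ 2))
          * ((N : ℝ) * κ) ^ d / (γ ^ d * δb)) := by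
  have hU : MeasurableSet U := hUcomp.measurableSet
  have hN' : (0 : ℝ) < N := by exact_mod_cast hN
  set e : ℝ := Real.exp (-(t - γ) ^ 2 / (2 * (N : ℝ) * a ^ 2))
  have hepos : 0 < e := Real.exp_pos _
  set r : ℝ := γ / ((N : ℝ) * κ) with hr
  have hrpos : 0 < r := by positivity
  have hc : 0 < δb * r ^ d := by positivity
  obtain ⟨B, hBsub, hBmeas, hB⟩ := exists_measurable_superset_of_null (ae_iff.mp hcontLip)
  have hgood : ∀ ω ∉ B, ∀ n, 1 ≤ n → n ≤ N → ContinuousOn (fun θ => M n θ ω) U ∧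
      ∀ θ ∈ U, ∀ θ' ∈ U, |M n θ ω - M n θ' ω| ≤ (N : ℝ) * κ * ‖θ - θ'‖ :=
    fun ω hω => not_not.mp fun h => hω (hBsub h)
  -- A jointly measurable version of the field, set to zero on the exceptional null set.
  set u : ℕ → U → Ω → ℝ := fun n θ => Bᶜ.indicator (M n θ)
  have hu : ∀ n ∈ Finset.Icc 1 N, Measurable (Function.uncurry (u n)) := by
    intro n hn
    obtain ⟨h1, h2⟩ := Finset.mem_Icc.mp hn
    refine measurable_uncurry_of_continuous_of_measurable (fun ω => ?_) fun θ =>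
      (((hadapt θ θ.2 n h2).mono (ℱ.le n)).measurable).indicator hBmeas.compl
    by_cases hω : ω ∈ B
    · simpa [u, hω] using continuous_const
    · have hcont := (hgood ω hω n h1 h2).1.comp_continuous continuous_subtype_val Subtype.prop
      simpa [u, hω, Function.comp_def] using hcont
  set A : Set (U × Ω) := ⋃ n ∈ Finset.Icc 1 N, {p | t - γ ≤ Function.uncurry (u n) p}
  have hA : MeasurableSet A :=
    Finset.measurableSet_biUnion _ fun n hn => measurableSet_le measurable_const (hu n hn)
  have hslice : ∀ θ : U, P (Prod.mk θ ⁻¹' A) ≤ ENNReal.ofReal e := by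
    intro θ
    refine (measure_mono ?_).trans (measure_exists_le_le_exp_of_finite_horizon hN ha
      (hadapt θ θ.2) (hint θ θ.2) (hM0 θ θ.2) (hmart θ θ.2) (hbdd θ θ.2) (sub_pos.mpr ht))
    intro ω hω
    simp only [A, Set.mem_preimage, Set.mem_iUnion, Finset.mem_Icc, Set.mem_ofPred_eq,
      Function.uncurry_apply_pair, exists_prop] at hω
    obtain ⟨n, hn, hω⟩ := hω
    refine ⟨n, hn.2, ?_⟩
    by_cases hωB : ω ∈ B
    · simp only [u, Set.indicator_of_notMem (Set.notMem_compl_iff.mpr hωB)] at hω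
      linarith
    · simpa [u, hωB] using hω
  set ν : Measure U := Measure.comap Subtype.val volume
  have hν : ν Set.univ = volume U := by
    rw [comap_subtype_coe_apply hU, Set.image_univ, Subtype.range_coe]
  set f : Ω → ENNReal := fun ω => ν ((fun θ => (θ, ω)) ⁻¹' A)
  have hvol : volume U ≠ ⊤ := hUcomp.measure_lt_top.ne
  have : IsFiniteMeasure ν := ⟨by rw [hν]; exact hvol.lt_top⟩
  have hf : ∫⁻ ω, f ω ∂P ≤ ENNReal.ofReal e * volume U :=
    calc ∫⁻ ω, f ω ∂P = (ν.prod P) A := (Measure.prod_apply_symm hA).symm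
      _ = ∫⁻ θ, P (Prod.mk θ ⁻¹' A) ∂ν := Measure.prod_apply hA
      _ ≤ ∫⁻ _, ENNReal.ofReal e ∂ν := lintegral_mono hslice
      _ = ENNReal.ofReal e * volume U := by
        rw [lintegral_const, hν]
  have hevent : {ω | ∃ n, 1 ≤ n ∧ n ≤ N ∧ ∃ θ ∈ U, t ≤ M n θ ω}
      ⊆ {ω | ENNReal.ofReal (δb * r ^ d) ≤ f ω} ∪ B := by
    rintro ω ⟨n, h1, h2, θ, hθ, hω⟩
    by_cases hωB : ω ∈ B
    · exact Or.inr hωB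
    refine Or.inl ?_
    have hcor := hcorner θ hθ r hrpos
    rw [min_eq_left hsmall] at hcor
    refine hcor.trans ?_
    simp only [f, ν]
    rw [comap_subtype_coe_apply hU]
    refine measure_mono ?_
    rintro θ' ⟨hball, hθ'⟩
    refine ⟨⟨θ', hθ'⟩, ?_, rfl⟩
    simp only [A, Set.mem_preimage, Set.mem_iUnion, Finset.mem_Icc, Set.mem_ofPred_eq,
      Function.uncurry_apply_pair, exists_prop]
    refine ⟨n, ⟨h1, h2⟩, ?_⟩
    have hlip := (le_abs_self _).trans ((hgood ω hωB n h1 h2).2 θ hθ θ' hθ')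
    have hdist : (N : ℝ) * κ * ‖θ - θ'‖ ≤ γ := by
      rw [← dist_eq_norm, dist_comm]
      calc (N : ℝ) * κ * dist θ' θ ≤ (N : ℝ) * κ * r := by
            gcongr
            exact (Metric.mem_ball.mp hball).le
        _ = γ := by rw [hr]; field_simp
    simp only [u, Set.indicator_of_mem (Set.mem_compl hωB)]
    linarith
  have hmarkov := (mul_meas_ge_le_lintegral (μ := P) (f := f) (measurable_measure_prodMk_right hA)
    (ENNReal.ofReal (δb * r ^ d))).trans hf
  rw [mul_comm, ← ENNReal.le_div_iff_mul_le (Or.inl (by simpa using hc))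
    (Or.inl ENNReal.ofReal_ne_top)] at hmarkov
  calc P {ω | ∃ n, 1 ≤ n ∧ n ≤ N ∧ ∃ θ ∈ U, t ≤ M n θ ω}
      ≤ P {ω | ENNReal.ofReal (δb * r ^ d) ≤ f ω} + P B :=
        (measure_mono hevent).trans (measure_union_le _ _)
    _ ≤ ENNReal.ofReal e * volume U / ENNReal.ofReal (δb * r ^ d) := by
        rw [hB, add_zero]
        exact hmarkov
    _ = _ := by
        rw [← ENNReal.ofReal_toReal hvol, ← ENNReal.ofReal_mul hepos.le,
          ← ENNReal.ofReal_div_of_pos hc, ENNReal.toReal_ofReal ENNReal.toReal_nonneg]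
        congr 1
        rw [hr, div_pow, mul_comm e]
        field_simp
end

section
/- Under the sequential pairwise-comparison model described in the context, there exist constants c_1, c_2 > 0, depending only on K, W, κ_0, κ_I and δ_b, such that the following holds: for every θ ∈ W, every ε_1 > 0, every ε_λ ∈ (0, 1], and all integers 1 ≤ n ≤ m, if min_{1≤t≤m} min_{a∈𝒜} λ_t^a ≥ ε_λ almost surely, then P_θ( sup_{n ≤ t ≤ m} ‖θ̂^{(t)} − θ‖ ≥ ε_1 ) ≤ c_2 · m^K · exp( −c_1 · n · ε_λ^2 · ε_1^4 ). -/
open MeasureTheory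

lemma exists_finset_net_of_bounded {d : ℕ} (S : Set (EuclideanSpace ℝ (Fin d))) (R m : ℕ)
    (hm : 1 ≤ m) (hS : ∀ x ∈ S, ‖x‖ ≤ R) :
    ∃ T : Finset (EuclideanSpace ℝ (Fin d)), (∀ y ∈ T, y ∈ S) ∧
      T.card ≤ ((2 * R + 1) * m) ^ d ∧ ∀ x ∈ S, ∃ y ∈ T, ‖x - y‖ ≤ d / m := by
  classical
  have hm' : (0 : ℝ) < m := by exact_mod_cast hm
  let cell : EuclideanSpace ℝ (Fin d) → Fin d → ℤ := fun x i => ⌊x i * m⌋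
  let box : Finset (Fin d → ℤ) :=
    Fintype.piFinset fun _ => Finset.Icc (-((R : ℤ) * m)) ((R : ℤ) * m)
  have hbox : ∀ x ∈ S, cell x ∈ box := by
    intro x hx
    refine Fintype.mem_piFinset.2 fun i => Finset.mem_Icc.2 ?_
    have h := abs_le.1 ((PiLp.norm_apply_le x i).trans (hS x hx))
    constructor
    · refine Int.le_floor.2 ?_
      push_cast
      nlinarith [h.1]
    · have h1 : ((⌊x i * m⌋ : ℤ) : ℝ) ≤ (((R : ℤ) * m : ℤ) : ℝ) := by
        refine (Int.floor_le _).trans ?_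
        push_cast
        nlinarith [h.2]
      exact_mod_cast h1
  have hdist : ∀ x y, cell x = cell y → ‖x - y‖ ≤ d / m := by
    intro x y hxy
    have hcoord : ∀ i, ‖(x - y) i‖ ≤ 1 / m := by
      intro i
      have h1 : |x i * m - y i * m| < 1 :=
        Int.abs_sub_lt_one_of_floor_eq_floor (congrFun hxy i)
      rw [← sub_mul, abs_mul, abs_of_pos hm'] at h1
      rw [le_div_iff₀ hm']
      simpa using h1.le
    have hsq : ‖x - y‖ ^ 2 ≤ (d / m : ℝ) ^ 2 := by
      rw [EuclideanSpace.norm_sq_eq]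
      calc ∑ i, ‖(x - y) i‖ ^ 2 ≤ ∑ _i : Fin d, (1 / m : ℝ) ^ 2 :=
            Finset.sum_le_sum fun i _ => pow_le_pow_left₀ (norm_nonneg _) (hcoord i) 2
        _ = d * (1 / m : ℝ) ^ 2 := by simp
        _ ≤ (d : ℝ) ^ 2 * (1 / m : ℝ) ^ 2 := by
            refine mul_le_mul_of_nonneg_right ?_ (by positivity)
            exact_mod_cast Nat.le_self_pow two_ne_zero d
        _ = (d / m : ℝ) ^ 2 := by ring
    exact le_of_sq_le_sq hsq (by positivity)
  let rep : (Fin d → ℤ) → EuclideanSpace ℝ (Fin d) := fun c =>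
    if h : ∃ x ∈ S, cell x = c then h.choose else 0
  have hrep : ∀ c, (∃ x ∈ S, cell x = c) → rep c ∈ S ∧ cell (rep c) = c := by
    intro c h
    simp only [rep, dif_pos h]
    exact h.choose_spec
  refine ⟨(box.filter fun c => ∃ x ∈ S, cell x = c).image rep, ?_, ?_, ?_⟩
  · intro y hy
    obtain ⟨c, hc, rfl⟩ := Finset.mem_image.1 hy
    exact (hrep c (Finset.mem_filter.1 hc).2).1
  · refine Finset.card_image_le.trans ((Finset.card_filter_le _ _).trans ?_)
    simp only [box, Fintype.card_piFinset, Int.card_Icc, Finset.prod_const, Finset.card_univ,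
      Fintype.card_fin]
    refine Nat.pow_le_pow_left ?_ d
    rw [Int.toNat_le]
    have : (1 : ℤ) ≤ m := by exact_mod_cast hm
    push_cast
    linarith
  · intro x hx
    have hx' : ∃ x' ∈ S, cell x' = cell x := ⟨x, hx, rfl⟩
    exact ⟨rep (cell x), Finset.mem_image_of_mem _ (Finset.mem_filter.2 ⟨hbox x hx, hx'⟩),
      hdist _ _ (hrep _ hx').2.symm⟩

lemma bernoulli_kl_nonneg {p q : ℝ} (hp : 0 < p) (hp1 : p < 1) (hq : 0 < q) (hq1 : q < 1) :
    0 ≤ p * Real.log (p / q) + (1 - p) * Real.log ((1 - p) / (1 - q)) := by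
  have key : ∀ x y : ℝ, 0 < x → 0 < y → x - y ≤ x * Real.log (x / y) := by
    intro x y hx hy
    calc x - y = x * (1 - (x / y)⁻¹) := by field_simp
      _ ≤ x * Real.log (x / y) :=
        mul_le_mul_of_nonneg_left (Real.one_sub_inv_le_log_of_pos (div_pos hx hy)) hx.le
  linarith [key p q hp hq, key (1 - p) (1 - q) (by linarith) (by linarith)]

lemma bernoulli_tilted_mean_le {p q B μ : ℝ} (hp : 0 < p) (hp1 : p < 1) (hq : 0 < q)
    (hq1 : q < 1) (hB : |Real.log q - Real.log p| ≤ B)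
    (hB' : |Real.log (1 - q) - Real.log (1 - p)| ≤ B) (hμ : 0 ≤ μ) (hμB : μ * B ≤ 1) :
    p * Real.exp (μ * (Real.log q - Real.log p))
        + (1 - p) * Real.exp (μ * (Real.log (1 - q) - Real.log (1 - p)))
      ≤ 1 - μ * (p * Real.log (p / q) + (1 - p) * Real.log ((1 - p) / (1 - q)))
        + (μ * B) ^ 2 := by
  have key : ∀ y : ℝ, |y| ≤ B → Real.exp (μ * y) ≤ 1 + μ * y + (μ * B) ^ 2 := by
    intro y hy
    have h1 : |μ * y| ≤ μ * B := by
      rw [abs_mul, abs_of_nonneg hμ]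
      exact mul_le_mul_of_nonneg_left hy hμ
    have h2 := (abs_le.1 (Real.abs_exp_sub_one_sub_id_le (h1.trans hμB))).2
    have h3 : (μ * y) ^ 2 ≤ (μ * B) ^ 2 := sq_le_sq' (abs_le.1 h1).1 (abs_le.1 h1).2
    linarith
  rw [Real.log_div hp.ne' hq.ne', Real.log_div (by linarith) (by linarith)]
  nlinarith [mul_le_mul_of_nonneg_left (key _ hB) hp.le,
    mul_le_mul_of_nonneg_left (key _ hB') (sub_pos.2 hp1).le]

lemma integral_mul_eq_of_condExp_ae_eq {Ω : Type*} {m₀ mΩ : MeasurableSpace Ω} {P : Measure Ω}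
    [IsFiniteMeasure P] (hm₀ : m₀ ≤ mΩ) {Z f g : Ω → ℝ} (hZ : StronglyMeasurable[m₀] Z)
    (hZf : Integrable (fun ω => Z ω * f ω) P) (hf : Integrable f P) (hfg : P[f | m₀] =ᵐ[P] g) :
    ∫ ω, Z ω * f ω ∂P = ∫ ω, Z ω * g ω ∂P := by
  rw [← integral_condExp hm₀]
  refine integral_congr_ae ?_
  filter_upwards [condExp_mul_of_stronglyMeasurable_left hZ hZf hf, hfg] with ω h1 h2
  have : P[fun ω => Z ω * f ω | m₀] ω = Z ω * P[f | m₀] ω := h1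
  rw [this, h2]

lemma integral_mul_pairwise_outcome_eq {Ω ι : Type*} [Fintype ι] [MeasurableSpace ι]
    [MeasurableSingletonClass ι] {m₀ mΩ : MeasurableSpace Ω} {P : Measure Ω}
    [IsFiniteMeasure P] (hm₀ : m₀ ≤ mΩ) {act : Ω → ι} {X : Ω → ℝ} {lam : ι → Ω → ℝ} {p : ι → ℝ}
    (hact : Measurable act) (hX : Measurable X) (hX01 : ∀ ω, X ω = 0 ∨ X ω = 1)
    (hlam : ∀ b, P[Set.indicator {ω | act ω = b} (fun _ => (1 : ℝ)) | m₀] =ᵐ[P] lam b)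
    (hlam01 : ∀ b, ∀ ω, 0 ≤ lam b ω ∧ lam b ω ≤ 1) (hlamm : ∀ b, Measurable (lam b))
    (hp : P[Set.indicator {ω | X ω = 1} (fun _ => (1 : ℝ))
      | m₀ ⊔ MeasurableSpace.comap act ⊤] =ᵐ[P] fun ω => p (act ω))
    {Z : Ω → ℝ} (hZ : Measurable[m₀] Z) (hZi : Integrable Z P) (u v : ι → ℝ) :
    ∫ ω, Z ω * (X ω * u (act ω) + (1 - X ω) * v (act ω)) ∂P
      = ∫ ω, Z ω * ∑ b, lam b ω * (p b * u b + (1 - p b) * v b) ∂P := by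
  classical
  have hG : m₀ ⊔ MeasurableSpace.comap act ⊤ ≤ mΩ := by
    refine sup_le hm₀ ?_
    rintro _ ⟨s, -, rfl⟩
    exact hact s.toFinite.measurableSet
  let I : ι → Ω → ℝ := fun b => Set.indicator {ω | act ω = b} fun _ => (1 : ℝ)
  have hIm : ∀ b, Measurable (I b) := fun b =>
    measurable_const.indicator (hact (measurableSet_singleton b))
  have hIG : ∀ b, Measurable[m₀ ⊔ MeasurableSpace.comap act ⊤] (I b) := fun b =>
    Measurable.indicator measurable_const
      (le_sup_right (a := m₀) _ ⟨{b}, trivial, rfl⟩)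
  have hI01 : ∀ b ω, ‖I b ω‖ ≤ 1 := by
    intro b ω
    by_cases h : act ω = b <;> simp [I, h]
  have hX1 : ∀ ω, ‖X ω‖ ≤ 1 := fun ω => by rcases hX01 ω with h | h <;> simp [h]
  have hXind : Set.indicator {ω | X ω = 1} (fun _ => (1 : ℝ)) = X := by
    ext ω
    rcases hX01 ω with h | h <;> simp [h]
  rw [hXind] at hp
  have hbdd : ∀ {Y f : Ω → ℝ}, Integrable Y P → Measurable f → (∀ ω, ‖f ω‖ ≤ 1) →
      Integrable (fun ω => Y ω * f ω) P := fun hY hf h1 =>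
    hY.mul_bdd (c := 1) hf.aestronglyMeasurable (Filter.Eventually.of_forall h1)
  have hZI : ∀ b, Integrable (fun ω => Z ω * I b ω) P := fun b => hbdd hZi (hIm b) (hI01 b)
  have hZIX : ∀ b, Integrable (fun ω => Z ω * I b ω * X ω) P := fun b =>
    hbdd (hZI b) hX hX1
  have hZl : ∀ b, Integrable (fun ω => Z ω * lam b ω) P := fun b =>
    hbdd hZi (hlamm b) fun ω => by
      rw [Real.norm_of_nonneg (hlam01 b ω).1]
      exact (hlam01 b ω).2
  have hone : Integrable (fun _ : Ω => (1 : ℝ)) P := integrable_const 1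
  have hXi : Integrable X P := by simpa using hbdd hone hX hX1
  have hIi : ∀ b, Integrable (I b) P := fun b => by simpa using hbdd hone (hIm b) (hI01 b)
  have e1 : ∀ b, ∫ ω, Z ω * I b ω ∂P = ∫ ω, Z ω * lam b ω ∂P := fun b =>
    integral_mul_eq_of_condExp_ae_eq hm₀ hZ.stronglyMeasurable (hZI b) (hIi b) (hlam b)
  have e2 : ∀ b, ∫ ω, Z ω * I b ω * X ω ∂P = p b * ∫ ω, Z ω * lam b ω ∂P := by
    intro b
    have hZG : Measurable[m₀ ⊔ MeasurableSpace.comap act ⊤] fun ω => Z ω * I b ω :=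
      (hZ.mono le_sup_left le_rfl).mul (hIG b)
    rw [integral_mul_eq_of_condExp_ae_eq hG hZG.stronglyMeasurable (hZIX b) hXi hp,
      ← e1 b, ← integral_const_mul]
    refine integral_congr_ae (Filter.Eventually.of_forall fun ω => ?_)
    by_cases h : act ω = b
    · simp only [h]; ring
    · simp [I, h]
  have hleft : ∀ ω, Z ω * (X ω * u (act ω) + (1 - X ω) * v (act ω))
      = ∑ b, (u b * (Z ω * I b ω * X ω) + v b * (Z ω * I b ω - Z ω * I b ω * X ω)) := by
    intro ω
    rw [Finset.sum_eq_single (act ω)]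
    · simp only [I, Set.indicator_apply, Set.mem_ofPred_eq, if_true]; ring
    · intro b _ hb
      simp [I, hb.symm]
    · simp
  have hright : ∀ ω, Z ω * ∑ b, lam b ω * (p b * u b + (1 - p b) * v b)
      = ∑ b, (p b * u b + (1 - p b) * v b) * (Z ω * lam b ω) := by
    intro ω
    rw [Finset.mul_sum]
    exact Finset.sum_congr rfl fun b _ => by ring
  simp_rw [hleft, hright]
  have hA : ∀ b, Integrable (fun ω => u b * (Z ω * I b ω * X ω)) P := fun b =>
    (hZIX b).const_mul _
  have hB : ∀ b, Integrable (fun ω => v b * (Z ω * I b ω - Z ω * I b ω * X ω)) P := fun b =>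
    ((hZI b).sub (hZIX b)).const_mul _
  rw [integral_finsetSum _ fun b _ => (hZl b).const_mul _,
    integral_finsetSum (f := fun b ω =>
      u b * (Z ω * I b ω * X ω) + v b * (Z ω * I b ω - Z ω * I b ω * X ω)) _
      fun b _ => (hA b).add (hB b)]
  refine Finset.sum_congr rfl fun b _ => ?_
  rw [integral_add (hA b) (hB b), integral_const_mul, integral_const_mul,
    integral_sub (hZI b) (hZIX b), e1, e2, integral_const_mul]
  ring

lemma integral_prod_pairwise_outcome_le {Ω ι : Type*} [Fintype ι] [MeasurableSpace ι]
    [MeasurableSingletonClass ι] {mΩ : MeasurableSpace Ω} {P : Measure Ω}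
    [IsProbabilityMeasure P] {ℱ : Filtration ℕ mΩ} {act : ℕ → Ω → ι} {X : ℕ → Ω → ℝ}
    {lam : ℕ → ι → Ω → ℝ} {p : ι → ℝ}
    (hact : ∀ t, 1 ≤ t → Measurable[ℱ t] (act t)) (hX : ∀ t, 1 ≤ t → Measurable[ℱ t] (X t))
    (hX01 : ∀ t, 1 ≤ t → ∀ ω, X t ω = 0 ∨ X t ω = 1)
    (hlamm : ∀ t, 1 ≤ t → ∀ b, Measurable[ℱ (t - 1)] (lam t b))
    (hlam01 : ∀ t, 1 ≤ t → ∀ ω, (∀ b, 0 ≤ lam t b ω) ∧ ∑ b, lam t b ω = 1)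
    (hlam : ∀ t, 1 ≤ t → ∀ b,
      P[Set.indicator {ω | act t ω = b} (fun _ => (1 : ℝ)) | ℱ (t - 1)] =ᵐ[P] lam t b)
    (hp : ∀ t, 1 ≤ t → P[Set.indicator {ω | X t ω = 1} (fun _ => (1 : ℝ))
      | ℱ (t - 1) ⊔ MeasurableSpace.comap (act t) ⊤] =ᵐ[P] fun ω => p (act t ω))
    {u v : ι → ℝ} (hu : ∀ b, 0 ≤ u b) (hv : ∀ b, 0 ≤ v b) {ρ : ℝ} (hρ : 0 ≤ ρ) {m : ℕ}
    (hbound : ∀ᵐ ω ∂P, ∀ t, 1 ≤ t → t ≤ m →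
      ∑ b, lam t b ω * (p b * u b + (1 - p b) * v b) ≤ ρ)
    (t : ℕ) (ht : t ≤ m) :
    Measurable[ℱ t]
        (fun ω => ∏ s ∈ Finset.Icc 1 t, (X s ω * u (act s ω) + (1 - X s ω) * v (act s ω))) ∧
      Integrable
        (fun ω => ∏ s ∈ Finset.Icc 1 t, (X s ω * u (act s ω) + (1 - X s ω) * v (act s ω))) P ∧
      ∫ ω, ∏ s ∈ Finset.Icc 1 t, (X s ω * u (act s ω) + (1 - X s ω) * v (act s ω)) ∂P
        ≤ ρ ^ t := by
  induction t with
  | zero => simp [measurable_const]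
  | succ t ih =>
    obtain ⟨ihm, ihi, ihle⟩ := ih (by omega)
    have h1 : 1 ≤ t + 1 := by omega
    have hYm : Measurable[ℱ (t + 1)] fun ω =>
        X (t + 1) ω * u (act (t + 1) ω) + (1 - X (t + 1) ω) * v (act (t + 1) ω) :=
      ((hX _ h1).mul ((measurable_of_finite u).comp (hact _ h1))).add
        ((measurable_const.sub (hX _ h1)).mul ((measurable_of_finite v).comp (hact _ h1)))
    have hY0 : ∀ s, 1 ≤ s → ∀ ω, 0 ≤ X s ω * u (act s ω) + (1 - X s ω) * v (act s ω) := by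
      intro s hs ω
      rcases hX01 s hs ω with h | h <;> simp [h, hu, hv]
    have hYb : ∀ ω, ‖X (t + 1) ω * u (act (t + 1) ω) + (1 - X (t + 1) ω) * v (act (t + 1) ω)‖
        ≤ ∑ b, (u b + v b) := by
      intro ω
      rw [Real.norm_of_nonneg (hY0 _ h1 ω)]
      refine le_trans ?_ (Finset.single_le_sum (f := fun b => u b + v b)
        (fun b _ => add_nonneg (hu b) (hv b)) (Finset.mem_univ (act (t + 1) ω)))
      rcases hX01 _ h1 ω with h | h <;> simp [h, hu, hv]
    have hYm' := hYm.mono (ℱ.le (t + 1)) le_rfl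
    simp only [Finset.prod_Icc_succ_top h1]
    refine ⟨(ihm.mono (ℱ.mono (Nat.le_succ t)) le_rfl).mul hYm,
      ihi.mul_bdd (c := ∑ b, (u b + v b)) hYm'.aestronglyMeasurable
        (Filter.Eventually.of_forall hYb), ?_⟩
    have hl01 : ∀ b ω, 0 ≤ lam (t + 1) b ω ∧ lam (t + 1) b ω ≤ 1 := fun b ω =>
      ⟨(hlam01 _ h1 ω).1 b, (hlam01 _ h1 ω).2 ▸
        Finset.single_le_sum (f := fun b => lam (t + 1) b ω)
          (fun b _ => (hlam01 _ h1 ω).1 b) (Finset.mem_univ b)⟩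
    have hlm : ∀ b, Measurable (lam (t + 1) b) := fun b =>
      (hlamm _ h1 b).mono (ℱ.le _) le_rfl
    rw [integral_mul_pairwise_outcome_eq (ℱ.le t) ((hact _ h1).mono (ℱ.le _) le_rfl)
      ((hX _ h1).mono (ℱ.le _) le_rfl) (hX01 _ h1) (hlam _ h1) hl01 hlm (hp _ h1) ihm ihi u v]
    have hSb : ∀ ω, ‖∑ b, lam (t + 1) b ω * (p b * u b + (1 - p b) * v b)‖
        ≤ ∑ b, ‖p b * u b + (1 - p b) * v b‖ := by
      intro ω
      refine (norm_sum_le _ _).trans (Finset.sum_le_sum fun b _ => ?_)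
      rw [norm_mul, Real.norm_of_nonneg (hl01 b ω).1]
      exact mul_le_of_le_one_left (norm_nonneg _) (hl01 b ω).2
    have hSm : Measurable fun ω => ∑ b, lam (t + 1) b ω * (p b * u b + (1 - p b) * v b) :=
      Finset.measurable_fun_sum _ fun b _ => (hlm b).mul_const _
    calc ∫ ω, (∏ s ∈ Finset.Icc 1 t, (X s ω * u (act s ω) + (1 - X s ω) * v (act s ω)))
            * ∑ b, lam (t + 1) b ω * (p b * u b + (1 - p b) * v b) ∂P
        ≤ ∫ ω, (∏ s ∈ Finset.Icc 1 t, (X s ω * u (act s ω) + (1 - X s ω) * v (act s ω)))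
            * ρ ∂P := by
          refine integral_mono_ae (ihi.mul_bdd hSm.aestronglyMeasurable
            (Filter.Eventually.of_forall hSb)) (ihi.mul_const ρ) ?_
          filter_upwards [hbound] with ω hω
          exact mul_le_mul_of_nonneg_left (hω _ h1 ht) (Finset.prod_nonneg fun s hs =>
            hY0 s (Finset.mem_Icc.1 hs).1 ω)
      _ ≤ ρ ^ (t + 1) := by
          rw [integral_mul_const, pow_succ]
          exact mul_le_mul_of_nonneg_right ihle hρ

lemma measureReal_logLikelihood_ge_le {Ω ι : Type*} [Fintype ι] [MeasurableSpace ι]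
    [MeasurableSingletonClass ι] {mΩ : MeasurableSpace Ω} {P : Measure Ω}
    [IsProbabilityMeasure P] {ℱ : Filtration ℕ mΩ} {act : ℕ → Ω → ι} {X : ℕ → Ω → ℝ}
    {lam : ℕ → ι → Ω → ℝ} {p q : ι → ℝ}
    (hact : ∀ t, 1 ≤ t → Measurable[ℱ t] (act t)) (hX : ∀ t, 1 ≤ t → Measurable[ℱ t] (X t))
    (hX01 : ∀ t, 1 ≤ t → ∀ ω, X t ω = 0 ∨ X t ω = 1)
    (hlamm : ∀ t, 1 ≤ t → ∀ b, Measurable[ℱ (t - 1)] (lam t b))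
    (hlam01 : ∀ t, 1 ≤ t → ∀ ω, (∀ b, 0 ≤ lam t b ω) ∧ ∑ b, lam t b ω = 1)
    (hlam : ∀ t, 1 ≤ t → ∀ b,
      P[Set.indicator {ω | act t ω = b} (fun _ => (1 : ℝ)) | ℱ (t - 1)] =ᵐ[P] lam t b)
    (hpX : ∀ t, 1 ≤ t → P[Set.indicator {ω | X t ω = 1} (fun _ => (1 : ℝ))
      | ℱ (t - 1) ⊔ MeasurableSpace.comap (act t) ⊤] =ᵐ[P] fun ω => p (act t ω))
    (hp : ∀ b, 0 < p b ∧ p b < 1) (hq : ∀ b, 0 < q b ∧ q b < 1) {B μ γ ε C : ℝ}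
    (hB : ∀ b, |Real.log (q b) - Real.log (p b)| ≤ B)
    (hB' : ∀ b, |Real.log (1 - q b) - Real.log (1 - p b)| ≤ B)
    (hμ : 0 ≤ μ) (hμB : μ * B ≤ 1) (hγ : 0 ≤ γ)
    (hkl : ∃ a, γ ≤ p a * Real.log (p a / q a) + (1 - p a) * Real.log ((1 - p a) / (1 - q a)))
    {m : ℕ} (hε : ∀ᵐ ω ∂P, ∀ t, 1 ≤ t → t ≤ m → ∀ b, ε ≤ lam t b ω)
    (t : ℕ) (ht : t ≤ m) :
    P.real {ω | -C ≤
        (∑ s ∈ Finset.Icc 1 t,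
          (X s ω * Real.log (q (act s ω)) + (1 - X s ω) * Real.log (1 - q (act s ω))))
        - ∑ s ∈ Finset.Icc 1 t,
          (X s ω * Real.log (p (act s ω)) + (1 - X s ω) * Real.log (1 - p (act s ω)))}
      ≤ Real.exp (μ * C) * Real.exp (-(t * (μ * ε * γ - (μ * B) ^ 2))) := by
  obtain ⟨a, ha⟩ := hkl
  let u : ι → ℝ := fun b => Real.exp (μ * (Real.log (q b) - Real.log (p b)))
  let v : ι → ℝ := fun b => Real.exp (μ * (Real.log (1 - q b) - Real.log (1 - p b)))
  let D : ι → ℝ := fun b =>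
    p b * Real.log (p b / q b) + (1 - p b) * Real.log ((1 - p b) / (1 - q b))
  have hD : ∀ b, 0 ≤ D b := fun b => bernoulli_kl_nonneg (hp b).1 (hp b).2 (hq b).1 (hq b).2
  have hmean : ∀ᵐ ω ∂P, ∀ t, 1 ≤ t → t ≤ m →
      ∑ b, lam t b ω * (p b * u b + (1 - p b) * v b)
        ≤ Real.exp (-(μ * ε * γ - (μ * B) ^ 2)) := by
    filter_upwards [hε] with ω hω t h1 htm
    obtain ⟨h0, hsum⟩ := hlam01 t h1 ω
    have hsD : ε * γ ≤ ∑ b, lam t b ω * D b :=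
      calc ε * γ ≤ lam t a ω * D a :=
            (mul_le_mul_of_nonneg_right (hω t h1 htm a) hγ).trans
              (mul_le_mul_of_nonneg_left ha (h0 a))
        _ ≤ ∑ b, lam t b ω * D b :=
            Finset.single_le_sum (f := fun b => lam t b ω * D b)
              (fun b _ => mul_nonneg (h0 b) (hD b)) (Finset.mem_univ a)
    calc ∑ b, lam t b ω * (p b * u b + (1 - p b) * v b)
        ≤ ∑ b, lam t b ω * (1 - μ * D b + (μ * B) ^ 2) :=
          Finset.sum_le_sum fun b _ => mul_le_mul_of_nonneg_left
            (bernoulli_tilted_mean_le (hp b).1 (hp b).2 (hq b).1 (hq b).2 (hB b) (hB' b)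
              hμ hμB) (h0 b)
      _ = (∑ b, lam t b ω) * (1 + (μ * B) ^ 2) - μ * ∑ b, lam t b ω * D b := by
          rw [Finset.sum_mul, Finset.mul_sum, ← Finset.sum_sub_distrib]
          exact Finset.sum_congr rfl fun b _ => by ring
      _ ≤ -(μ * ε * γ - (μ * B) ^ 2) + 1 := by
          rw [hsum]
          linarith [mul_le_mul_of_nonneg_left hsD hμ]
      _ ≤ Real.exp (-(μ * ε * γ - (μ * B) ^ 2)) := Real.add_one_le_exp _
  obtain ⟨-, hinteg, hle⟩ := integral_prod_pairwise_outcome_le (u := u) (v := v) hact hX hX01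
    hlamm hlam01 hlam hpX (fun b => (Real.exp_pos _).le) (fun b => (Real.exp_pos _).le)
    (Real.exp_pos _).le hmean t ht
  have hprod : ∀ ω, ∏ s ∈ Finset.Icc 1 t, (X s ω * u (act s ω) + (1 - X s ω) * v (act s ω))
      = Real.exp (μ * ((∑ s ∈ Finset.Icc 1 t,
          (X s ω * Real.log (q (act s ω)) + (1 - X s ω) * Real.log (1 - q (act s ω))))
        - ∑ s ∈ Finset.Icc 1 t,
          (X s ω * Real.log (p (act s ω)) + (1 - X s ω) * Real.log (1 - p (act s ω))))) := by
    intro ω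
    rw [← Finset.sum_sub_distrib, Finset.mul_sum, Real.exp_sum]
    refine Finset.prod_congr rfl fun s hs => ?_
    rcases hX01 s (Finset.mem_Icc.1 hs).1 ω with h | h <;> simp [h, u, v]
  simp only [hprod] at hinteg hle
  have hmarkov := mul_meas_ge_le_integral_of_nonneg
    (Filter.Eventually.of_forall fun ω => (Real.exp_pos _).le) hinteg (Real.exp (μ * -C))
  rw [← Real.exp_nat_mul] at hle
  calc _ ≤ P.real {ω | Real.exp (μ * -C) ≤ Real.exp (μ * ((∑ s ∈ Finset.Icc 1 t,
          (X s ω * Real.log (q (act s ω)) + (1 - X s ω) * Real.log (1 - q (act s ω))))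
        - ∑ s ∈ Finset.Icc 1 t,
          (X s ω * Real.log (p (act s ω)) + (1 - X s ω) * Real.log (1 - p (act s ω)))))} :=
        measureReal_mono fun ω hω => Real.exp_le_exp.2 (mul_le_mul_of_nonneg_left hω hμ)
    _ ≤ Real.exp (μ * C) * Real.exp (t * -(μ * ε * γ - (μ * B) ^ 2)) := by
        rw [← neg_neg (μ * C), Real.exp_neg, ← div_eq_inv_mul, le_div_iff₀' (Real.exp_pos _),
          ← mul_neg]
        exact hmarkov.trans hle
    _ = _ := by rw [mul_neg]

/-- Lemma 1 of the paper: exponential deviation bound for the maximum likelihood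
estimator over a moving time window in the sequential pairwise-comparison model.
There exist constants `c1, c2 > 0` depending only on `K, W, κ0, κI, δb` such that
for every data-generating process with selection probabilities bounded below by
`εl`, `P_θ(sup_{n≤t≤m} ‖θ̂^{(t)} − θ‖ ≥ ε1) ≤ c2 m^K exp(−c1 n εl² ε1⁴)`. -/
theorem mle_moving_window_deviation_bound
    (K : ℕ) (hK : 2 ≤ K)
    (W : Set (EuclideanSpace ℝ (Fin (K - 1)))) (hWcomp : IsCompact W)
    (δb : ℝ) (hδb : 0 < δb)
    (hcorner : ∀ θ ∈ W, ∀ s : ℝ, 0 < s →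
      ENNReal.ofReal (min (δb * s ^ (K - 1)) 1) ≤ volume (Metric.ball θ s ∩ W))
    (κ0 κI : ℝ) (hκ0 : 0 < κ0) (hκI : 0 < κI) :
    ∃ c1 > (0 : ℝ), ∃ c2 > (0 : ℝ),
      ∀ (pa : {p : Fin K × Fin K // p.1 < p.2} → EuclideanSpace ℝ (Fin (K - 1)) → ℝ),
        -- the comparison probabilities lie in (0,1) on W
        (∀ a, ∀ θ ∈ W, 0 < pa a θ ∧ pa a θ < 1) →
        -- log p_a and log(1 − p_a) are κ0-Lipschitz on W
        (∀ a, ∀ θ ∈ W, ∀ θ' ∈ W,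
          |Real.log (pa a θ) - Real.log (pa a θ')| ≤ κ0 * ‖θ - θ'‖) →
        (∀ a, ∀ θ ∈ W, ∀ θ' ∈ W,
          |Real.log (1 - pa a θ) - Real.log (1 - pa a θ')| ≤ κ0 * ‖θ - θ'‖) →
        -- quantitative identifiability: max_a D^a(θ‖θ') ≥ κI ‖θ − θ'‖²
        (∀ θ ∈ W, ∀ θ' ∈ W, ∃ a,
          κI * ‖θ - θ'‖ ^ 2 ≤
            pa a θ * Real.log (pa a θ / pa a θ')
              + (1 - pa a θ) * Real.log ((1 - pa a θ) / (1 - pa a θ'))) →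
        ∀ θ, θ ∈ W →
        ∀ ε1 : ℝ, 0 < ε1 → ∀ εl : ℝ, 0 < εl → εl ≤ 1 →
        ∀ n m : ℕ, 1 ≤ n → n ≤ m →
        ∀ (Ω : Type) (mΩ : MeasurableSpace Ω) (P : Measure Ω),
          IsProbabilityMeasure P →
        ∀ (ℱ : Filtration ℕ mΩ)
          (act : ℕ → Ω → {p : Fin K × Fin K // p.1 < p.2})
          (X : ℕ → Ω → ℝ)
          (lam : ℕ → {p : Fin K × Fin K // p.1 < p.2} → Ω → ℝ)
          (θhat : ℕ → Ω → EuclideanSpace ℝ (Fin (K - 1))),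
          -- the selected pairs and outcomes are adapted, with X_t ∈ {0, 1}
          (∀ t, 1 ≤ t → Measurable[ℱ t] (act t)) →
          (∀ t, 1 ≤ t → Measurable[ℱ t] (X t)) →
          (∀ t, 1 ≤ t → ∀ ω, X t ω = 0 ∨ X t ω = 1) →
          -- λ_t is an ℱ_{t−1}-measurable probability vector over pairs
          (∀ t, 1 ≤ t → ∀ b, Measurable[ℱ (t - 1)] (lam t b)) →
          (∀ t, 1 ≤ t → ∀ ω, (∀ b, 0 ≤ lam t b ω) ∧ ∑ b, lam t b ω = 1) →
          -- P(a_t = b | ℱ_{t−1}) = λ_t^b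
          (∀ t, 1 ≤ t → ∀ b,
            (P[Set.indicator {ω | act t ω = b} (fun _ => (1 : ℝ)) | ℱ (t - 1)])
              =ᵐ[P] lam t b) →
          -- P(X_t = 1 | ℱ_{t−1} ∨ σ(a_t)) = p_{a_t}(θ)
          (∀ t, 1 ≤ t →
            (P[Set.indicator {ω | X t ω = 1} (fun _ => (1 : ℝ))
                | ℱ (t - 1) ⊔ MeasurableSpace.comap (act t) ⊤])
              =ᵐ[P] fun ω => pa (act t ω) θ) →
          -- θ̂^{(t)} is an ℱ_t-measurable maximizer over W of the log-likelihood
          (∀ t, ∀ ω, θhat t ω ∈ W) →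
          (∀ t, Measurable[ℱ t] (θhat t)) →
          (∀ t, ∀ ω, ∀ θ' ∈ W,
            (∑ s ∈ Finset.Icc 1 t,
              (X s ω * Real.log (pa (act s ω) θ')
                + (1 - X s ω) * Real.log (1 - pa (act s ω) θ')))
            ≤ ∑ s ∈ Finset.Icc 1 t,
                (X s ω * Real.log (pa (act s ω) (θhat t ω))
                  + (1 - X s ω) * Real.log (1 - pa (act s ω) (θhat t ω)))) →
          -- the selection probabilities are bounded below by εl up to time m, a.s.
          (∀ᵐ ω ∂P, ∀ t, 1 ≤ t → t ≤ m → ∀ b, εl ≤ lam t b ω) →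
          P {ω | ∃ t, n ≤ t ∧ t ≤ m ∧ ε1 ≤ ‖θhat t ω - θ‖}
            ≤ ENNReal.ofReal
                (c2 * (m : ℝ) ^ K * Real.exp (-(c1 * n * εl ^ 2 * ε1 ^ 4))) := by
  obtain ⟨R₀, hR₀⟩ := hWcomp.isBounded.exists_norm_le
  obtain ⟨R, hR⟩ := exists_nat_ge R₀
  have hWR : ∀ x ∈ W, ‖x‖ ≤ R := fun x hx => (hR₀ x hx).trans hR
  let D : ℝ := 2 * R + 1
  have hD : 0 < D := by positivity
  let β : ℝ := min (κI / (2 * κ0 ^ 2)) (1 / (κ0 * D))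
  have hβ : 0 < β := lt_min (by positivity) (by positivity)
  have hβ1 : β * κ0 ^ 2 ≤ κI / 2 :=
    calc β * κ0 ^ 2 ≤ κI / (2 * κ0 ^ 2) * κ0 ^ 2 :=
          mul_le_mul_of_nonneg_right (min_le_left _ _) (by positivity)
      _ = κI / 2 := by field_simp
  have hβ2 : β * (κ0 * D) ≤ 1 := (le_div_iff₀ (by positivity)).1 (min_le_right _ _)
  let C : ℝ := κ0 * (K - 1 : ℕ)
  refine ⟨β * κI / (2 * D ^ 2), by positivity,
    (2 * R + 1 : ℝ) ^ (K - 1) * Real.exp (β * C), by positivity, ?_⟩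
  intro pa hpa hlip hlip' hident θ hθ ε1 hε1 εl hεl hεl1 n m hn hnm Ω mΩ P hP ℱ act X lam θhat
    hact hX hX01 hlamm hlam01 hlam hpX hθW _ hmle hlow
  have hm : 1 ≤ m := hn.trans hnm
  have hm' : (0 : ℝ) < m := by exact_mod_cast hm
  let S : Set (EuclideanSpace ℝ (Fin (K - 1))) := {x | x ∈ W ∧ ε1 ≤ ‖x - θ‖}
  obtain ⟨T, hTS, hTcard, hTnet⟩ :=
    exists_finset_net_of_bounded S R m hm fun x hx => hWR x hx.1
  let L : ℕ → EuclideanSpace ℝ (Fin (K - 1)) → Ω → ℝ := fun t θ' ω =>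
    ∑ s ∈ Finset.Icc 1 t, (X s ω * Real.log (pa (act s ω) θ')
      + (1 - X s ω) * Real.log (1 - pa (act s ω) θ'))
  have hLlip : ∀ t ω, ∀ x ∈ W, ∀ y ∈ W, L t x ω - L t y ω ≤ t * (κ0 * ‖x - y‖) := by
    intro t ω x hx y hy
    calc L t x ω - L t y ω
        ≤ ∑ _s ∈ Finset.Icc 1 t, κ0 * ‖x - y‖ := by
          simp only [L]
          rw [← Finset.sum_sub_distrib]
          refine Finset.sum_le_sum fun s hs => ?_
          have h1 := (abs_le.1 (hlip (act s ω) x hx y hy)).2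
          have h2 := (abs_le.1 (hlip' (act s ω) x hx y hy)).2
          rcases hX01 s (Finset.mem_Icc.1 hs).1 ω with h | h <;> rw [h] <;> linarith
      _ = t * (κ0 * ‖x - y‖) := by simp
  have hpoint : ∀ t, n ≤ t → t ≤ m → ∀ y ∈ T,
      P.real {ω | -C ≤ L t y ω - L t θ ω}
        ≤ Real.exp (β * C) * Real.exp (-(β * κI / (2 * D ^ 2) * n * εl ^ 2 * ε1 ^ 4)) := by
    intro t hnt htm y hy
    obtain ⟨hyW, hyε⟩ := hTS y hy
    have hyD : ‖y - θ‖ ≤ D := by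
      have := norm_sub_le y θ
      simp only [D]
      linarith [hWR y hyW, hWR θ hθ]
    have hC : 0 ≤ C := by positivity
    refine (measureReal_logLikelihood_ge_le (p := fun b => pa b θ) (q := fun b => pa b y)
      (B := κ0 * ‖y - θ‖) (μ := β * εl) (γ := κI * ‖θ - y‖ ^ 2) (C := C) hact hX hX01 hlamm
      hlam01 hlam hpX (fun b => hpa b θ hθ) (fun b => hpa b y hyW)
      (fun b => hlip b y hyW θ hθ) (fun b => hlip' b y hyW θ hθ) (by positivity) ?_
      (by positivity) (hident θ hθ y hyW) hlow t htm).trans ?_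
    · calc β * εl * (κ0 * ‖y - θ‖) ≤ β * 1 * (κ0 * D) := by gcongr
        _ ≤ 1 := by rw [mul_one]; exact hβ2
    · refine mul_le_mul (Real.exp_le_exp.2 ?_) (Real.exp_le_exp.2 (neg_le_neg ?_))
        (Real.exp_pos _).le (Real.exp_pos _).le
      · exact mul_le_mul_of_nonneg_right (mul_le_of_le_one_right hβ.le hεl1) hC
      · have hnt' : (n : ℝ) ≤ t := by exact_mod_cast hnt
        have hε4 : ε1 ^ 4 / D ^ 2 ≤ ‖y - θ‖ ^ 2 := by
          rw [div_le_iff₀ (by positivity)]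
          calc ε1 ^ 4 = ε1 ^ 2 * ε1 ^ 2 := by ring
            _ ≤ ‖y - θ‖ ^ 2 * D ^ 2 := by
              gcongr
              exact hyε.trans hyD
        rw [norm_sub_rev θ y]
        calc β * κI / (2 * D ^ 2) * n * εl ^ 2 * ε1 ^ 4
            = n * (β * εl ^ 2 * (κI / 2) * (ε1 ^ 4 / D ^ 2)) := by field_simp
          _ ≤ t * (β * εl ^ 2 * (κI - β * κ0 ^ 2) * ‖y - θ‖ ^ 2) := by
              have : κI / 2 ≤ κI - β * κ0 ^ 2 := by linarith
              have : 0 ≤ κI - β * κ0 ^ 2 := by linarith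
              gcongr
          _ = t * (β * εl * εl * (κI * ‖y - θ‖ ^ 2) - (β * εl * (κ0 * ‖y - θ‖)) ^ 2) := by
              ring
  have hcover : {ω | ∃ t, n ≤ t ∧ t ≤ m ∧ ε1 ≤ ‖θhat t ω - θ‖}
      ⊆ ⋃ i ∈ Finset.Icc n m ×ˢ T, {ω | -C ≤ L i.1 i.2 ω - L i.1 θ ω} := by
    rintro ω ⟨t, hnt, htm, hεt⟩
    obtain ⟨y, hyT, hy⟩ := hTnet (θhat t ω) ⟨hθW t ω, hεt⟩
    refine Set.mem_biUnion (x := (t, y))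
      (Finset.mem_product.2 ⟨Finset.mem_Icc.2 ⟨hnt, htm⟩, hyT⟩) ?_
    have h1 := hLlip t ω (θhat t ω) (hθW t ω) y (hTS y hyT).1
    have h2 : L t θ ω ≤ L t (θhat t ω) ω := hmle t ω θ hθ
    have h3 : (t : ℝ) * (κ0 * ‖θhat t ω - y‖) ≤ C :=
      calc (t : ℝ) * (κ0 * ‖θhat t ω - y‖) ≤ m * (κ0 * ((K - 1 : ℕ) / m)) := by
            gcongr
        _ = C := by simp only [C]; field_simp
    change -C ≤ L t y ω - L t θ ω
    linarith
  rw [← ofReal_measureReal]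
  refine ENNReal.ofReal_le_ofReal ?_
  have hcard : ((Finset.Icc n m ×ˢ T).card : ℝ) ≤ (2 * R + 1 : ℝ) ^ (K - 1) * (m : ℝ) ^ K := by
    have h1 : (Finset.Icc n m ×ˢ T).card ≤ m * ((2 * R + 1) * m) ^ (K - 1) := by
      rw [Finset.card_product, Nat.card_Icc]
      exact Nat.mul_le_mul (by omega) hTcard
    have h2 : m * ((2 * R + 1) * m) ^ (K - 1) = (2 * R + 1) ^ (K - 1) * m ^ K := by
      obtain ⟨k, rfl⟩ : ∃ k, K = k + 1 := ⟨K - 1, by omega⟩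
      rw [Nat.add_sub_cancel, mul_pow, pow_succ]
      ring
    rw [h2] at h1
    exact_mod_cast h1
  calc P.real {ω | ∃ t, n ≤ t ∧ t ≤ m ∧ ε1 ≤ ‖θhat t ω - θ‖}
      ≤ P.real (⋃ i ∈ Finset.Icc n m ×ˢ T, {ω | -C ≤ L i.1 i.2 ω - L i.1 θ ω}) :=
        measureReal_mono hcover (measure_ne_top P _)
    _ ≤ ∑ i ∈ Finset.Icc n m ×ˢ T, P.real {ω | -C ≤ L i.1 i.2 ω - L i.1 θ ω} :=
        measureReal_biUnion_finset_le _ _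
    _ ≤ ∑ _i ∈ Finset.Icc n m ×ˢ T,
          Real.exp (β * C) * Real.exp (-(β * κI / (2 * D ^ 2) * n * εl ^ 2 * ε1 ^ 4)) := by
        refine Finset.sum_le_sum fun i hi => ?_
        obtain ⟨hi1, hi2⟩ := Finset.mem_product.1 hi
        exact hpoint i.1 (Finset.mem_Icc.1 hi1).1 (Finset.mem_Icc.1 hi1).2 i.2 hi2
    _ = (Finset.Icc n m ×ˢ T).card *
          (Real.exp (β * C) * Real.exp (-(β * κI / (2 * D ^ 2) * n * εl ^ 2 * ε1 ^ 4))) := by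
        rw [Finset.sum_const, nsmul_eq_mul]
    _ ≤ (2 * R + 1 : ℝ) ^ (K - 1) * (m : ℝ) ^ K *
          (Real.exp (β * C) * Real.exp (-(β * κI / (2 * D ^ 2) * n * εl ^ 2 * ε1 ^ 4))) :=
        mul_le_mul_of_nonneg_right hcard (by positivity)
    _ = _ := by ring
end

section
/- Let W ⊂ ℝ^d be a bounded Lebesgue-measurable set, let ρ : W → [0, ∞) be measurable with δ_ρ ≤ ρ(θ) ≤ ρ_max for all θ ∈ W (where δ_ρ > 0), and let ℓ : W → ℝ be κ-Lipschitz (|ℓ(θ) − ℓ(θ′)| ≤ κ‖θ − θ′‖ for all θ, θ′ ∈ W). Let V ⊆ W and W′ ⊆ W be measurable sets with m(V) > 0, let θ* ∈ W′, and let s > 0 satisfy m(W′ ∩ B(θ*, s)) ≥ δ_b s^d for a constant δ_b > 0. Then ∫_V e^{ℓ(θ)} ρ(θ) dθ / ∫_{W′} e^{ℓ(θ)} ρ(θ) dθ ≤ [ ρ_max · m(V) / (δ_ρ · δ_b · s^d) ] · exp( sup_{θ∈V} ℓ(θ) − ℓ(θ*) + κ s ), where m denotes Lebesgue measure and B(θ*,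 s) the open Euclidean ball of radius s. -/
open MeasureTheory

/-- A Lipschitz map sends bounded sets to bounded sets. -/
theorem LipschitzOnWith.isBounded_image {α β : Type*} [PseudoMetricSpace α]
    [PseudoMetricSpace β] {K : NNReal} {f : α → β} {s : Set α} (hf : LipschitzOnWith K f s)
    (hs : Bornology.IsBounded s) : Bornology.IsBounded (f '' s) :=
  Metric.isBounded_iff_ediam_ne_top.2 <| ne_top_of_le_ne_top
    (ENNReal.mul_ne_top ENNReal.coe_ne_top hs.ediam_ne_top) <|
    Metric.ediam_image_le_iff.2 fun _ hx _ hy =>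
      (hf hx hy).trans (by gcongr; exact Metric.edist_le_ediam_of_mem hx hy)

/-- An exponentially weighted bounded density is integrable on a bounded measurable set as soon as
the exponent is Lipschitz there. -/
theorem integrableOn_exp_mul_of_lipschitzOnWith {E : Type*} [NormedAddCommGroup E]
    [MeasurableSpace E] [BorelSpace E] [SecondCountableTopology E] {μ : Measure E}
    {W : Set E} (hW : Bornology.IsBounded W) (hWmeas : MeasurableSet W) (hμW : μ W ≠ ⊤)
    {ρ : E → ℝ} (hρmeas : Measurable ρ) {C : ℝ} (hρ : ∀ θ ∈ W, |ρ θ| ≤ C)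
    {ℓ : E → ℝ} {K : NNReal} (hLip : LipschitzOnWith K ℓ W) :
    IntegrableOn (fun θ => Real.exp (ℓ θ) * ρ θ) W μ := by
  obtain ⟨M, hM⟩ := (hLip.isBounded_image hW).bddAbove
  refine IntegrableOn.of_bound hμW.lt_top ?_ (Real.exp M * C) ?_
  · exact ((Real.continuous_exp.comp_continuousOn hLip.continuousOn).aestronglyMeasurable
      hWmeas).mul hρmeas.aestronglyMeasurable
  · filter_upwards [ae_restrict_mem hWmeas] with θ hθ
    rw [norm_mul, Real.norm_eq_abs, Real.norm_eq_abs, Real.abs_exp]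
    gcongr
    · exact hM ⟨θ, hθ, rfl⟩
    · exact hρ θ hθ

/-- Deterministic bound on ratios of weighted exponential integrals (eqs. ub-stat,
lb-prob, score-bound in the proof of Lemma 3 of the paper):
`∫_V e^{ℓ} ρ / ∫_{W'} e^{ℓ} ρ ≤ [ρmax m(V)/(δρ δb s^d)] exp(sup_V ℓ − ℓ(θ*) + κ s)`. -/
theorem posterior_ratio_bound
    (d : ℕ) (W : Set (EuclideanSpace ℝ (Fin d)))
    (hWbdd : Bornology.IsBounded W) (hWmeas : MeasurableSet W)
    (ρ : EuclideanSpace ℝ (Fin d) → ℝ) (hρmeas : Measurable ρ)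
    (δρ ρmax : ℝ) (hδρ : 0 < δρ)
    (hρ : ∀ θ ∈ W, δρ ≤ ρ θ ∧ ρ θ ≤ ρmax)
    (ℓ : EuclideanSpace ℝ (Fin d) → ℝ) (κ : ℝ) (hκ : 0 < κ)
    (hLip : ∀ θ ∈ W, ∀ θ' ∈ W, |ℓ θ - ℓ θ'| ≤ κ * ‖θ - θ'‖)
    (V W' : Set (EuclideanSpace ℝ (Fin d)))
    (hVW : V ⊆ W) (hW'W : W' ⊆ W)
    (hVmeas : MeasurableSet V) (hW'meas : MeasurableSet W')
    (hVpos : 0 < volume V)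
    (θs : EuclideanSpace ℝ (Fin d)) (hθs : θs ∈ W')
    (s δb : ℝ) (hs : 0 < s) (hδb : 0 < δb)
    (hball : ENNReal.ofReal (δb * s ^ d) ≤ volume (W' ∩ Metric.ball θs s)) :
    (∫ θ in V, Real.exp (ℓ θ) * ρ θ) / (∫ θ in W', Real.exp (ℓ θ) * ρ θ)
      ≤ (ρmax * (volume V).toReal / (δρ * δb * s ^ d))
          * Real.exp ((⨆ θ : V, ℓ θ) - ℓ θs + κ * s) := by
  have hθsW : θs ∈ W := hW'W hθs
  have hLipOn : LipschitzOnWith κ.toNNReal ℓ W :=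
    LipschitzOnWith.of_dist_le_mul fun θ hθ θ' hθ' => by
      rw [Real.coe_toNNReal _ hκ.le, Real.dist_eq, dist_eq_norm]
      exact hLip θ hθ θ' hθ'
  have hρmax : 0 < ρmax := hδρ.trans_le ((hρ θs hθsW).1.trans (hρ θs hθsW).2)
  have hint : IntegrableOn (fun θ => Real.exp (ℓ θ) * ρ θ) W :=
    integrableOn_exp_mul_of_lipschitzOnWith hWbdd hWmeas hWbdd.measure_lt_top.ne hρmeas
      (fun θ hθ => by rw [abs_of_pos (hδρ.trans_le (hρ θ hθ).1)]; exact (hρ θ hθ).2) hLipOn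
  have hbdd : BddAbove (Set.range fun θ : V => ℓ θ) := by
    rw [← Set.image_eq_range]
    exact (hLipOn.isBounded_image hWbdd).bddAbove.mono (Set.image_mono hVW)
  have hVtop : volume V ≠ ⊤ := (hWbdd.subset hVW).measure_lt_top.ne
  have hupper : ∫ θ in V, Real.exp (ℓ θ) * ρ θ
      ≤ Real.exp (⨆ θ : V, ℓ θ) * ρmax * (volume V).toReal := by
    calc ∫ θ in V, Real.exp (ℓ θ) * ρ θ
        ≤ ∫ _ in V, Real.exp (⨆ θ : V, ℓ θ) * ρmax := by
          refine setIntegral_mono_on (hint.mono_set hVW) (integrableOn_const hVtop) hVmeas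
            fun θ hθ => ?_
          gcongr
          · exact hδρ.le.trans (hρ θ (hVW hθ)).1
          · exact le_ciSup hbdd ⟨θ, hθ⟩
          · exact (hρ θ (hVW hθ)).2
      _ = _ := by rw [setIntegral_const, smul_eq_mul, mul_comm, measureReal_def]
  have hAW' : W' ∩ Metric.ball θs s ⊆ W' := Set.inter_subset_left
  have hAmeas : MeasurableSet (W' ∩ Metric.ball θs s) := hW'meas.inter measurableSet_ball
  have hAtop : volume (W' ∩ Metric.ball θs s) ≠ ⊤ :=
    (hWbdd.subset (hAW'.trans hW'W)).measure_lt_top.ne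
  have hlower : Real.exp (ℓ θs - κ * s) * δρ * (δb * s ^ d)
      ≤ ∫ θ in W', Real.exp (ℓ θ) * ρ θ := by
    calc Real.exp (ℓ θs - κ * s) * δρ * (δb * s ^ d)
        ≤ Real.exp (ℓ θs - κ * s) * δρ * (volume (W' ∩ Metric.ball θs s)).toReal := by
          gcongr
          exact (ENNReal.ofReal_le_iff_le_toReal hAtop).1 hball
      _ = ∫ _ in W' ∩ Metric.ball θs s, Real.exp (ℓ θs - κ * s) * δρ := by
          rw [setIntegral_const, smul_eq_mul, mul_comm, measureReal_def]
      _ ≤ ∫ θ in W' ∩ Metric.ball θs s, Real.exp (ℓ θ) * ρ θ := by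
          refine setIntegral_mono_on (integrableOn_const hAtop)
            (hint.mono_set (hAW'.trans hW'W)) hAmeas fun θ hθ => ?_
          have hθs_sub : ℓ θs - ℓ θ ≤ κ * s := by
            refine (le_abs_self _).trans ((hLip θs hθsW θ (hW'W hθ.1)).trans ?_)
            gcongr
            rw [← dist_eq_norm, dist_comm]
            exact (Metric.mem_ball.1 hθ.2).le
          gcongr
          · linarith
          · exact (hρ θ (hW'W hθ.1)).1
      _ ≤ ∫ θ in W', Real.exp (ℓ θ) * ρ θ := by
          refine setIntegral_mono_set (hint.mono_set hW'W) ?_ hAW'.eventuallyLE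
          filter_upwards [ae_restrict_mem hW'meas] with θ hθ
          exact mul_nonneg (Real.exp_pos _).le (hδρ.le.trans (hρ θ (hW'W hθ)).1)
  calc (∫ θ in V, Real.exp (ℓ θ) * ρ θ) / (∫ θ in W', Real.exp (ℓ θ) * ρ θ)
      ≤ (Real.exp (⨆ θ : V, ℓ θ) * ρmax * (volume V).toReal)
          / (Real.exp (ℓ θs - κ * s) * δρ * (δb * s ^ d)) := by
        gcongr
    _ = _ := by
        rw [sub_add, Real.exp_sub _ (ℓ θs - κ * s)]
        field_simp
end
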